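/- (Ore–Sato theorem, existence form.) Let b : ℤ^r → k(X_1,…,X_r)^× be a 1-cocycle, i.e. b(m + m') = τ_m(b(m')) · b(m) for all m, m' ∈ ℤ^r. Then there exist: a group homomorphism c : ℤ^r → k^×; an element F ∈ k(X_1,…,X_r)^×; an integer l ≥ 0; irreducible univariate polynomials h_1,…,h_l ∈ k[t]; nonzero vectors μ_1,…,μ_l ∈ ℤ^r, each with greatest common divisor of its nonzero entries equal to 1 (write μ_i(m) = Σ_a μ_{i,a} m_a and μ_i(X) = Σ_a μ_{i,a} X_a); and finitely supported functions z_i : ℤ → ℤ, such that for all m ∈ ℤ^r: b(m) = c(m) · τ_m(F)·F^{−1} · Π_{i=1}^{l} Π_{j ∈ ℤ} P_i(j,m)^{z_i(j)}, where P_i(j,m) = Π_{ν=0}^{μ_i(m)−1} h_i(μ_i(X) + j + ν) if μ_i(m) ≥ 1, P_i(j,m) = 1 if μ_i(m) = 0, and P_i(j,m) = Π_{ν=μ_i(m)}^{−1} h_i(μ_i(X) + j + ν)^{−1} if μ_i(m) ≤ −1. -/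

import Mathlib

/-!
Sending a rational function to its divisor, an element of `ℤ[S]` for `S` the set of irreducible
polynomials up to constants, is equivariant for translations and has kernel `kˣ`. Hence a cocycle
is determined by its divisor up to a homomorphism `ℤ^r → kˣ`, and it suffices to realise every
cocycle `β` of `ℤ^r` in `ℤ[S]` by explicit factors, one orbit of `S` at a time. The quotient of
`ℤ^r` by the stabilizer `H` of `p ∈ S` is torsion-free (characteristic zero) and nontrivial.

If the quotient has rank at least two, it has one end: `β g` is the formal coboundary of a function
on the orbit which is invariant under `g` away from a finite set, hence constant at infinity along
the whole orbit, and subtracting that constant makes `β` the coboundary of an element of `ℤ[S]`.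
If it has rank one, then `H` is the kernel of a primitive linear form `μ`, the irreducible
polynomial is `p = h(μ(X))`, and `β` vanishes on `H` and is determined by its value at a single
`m₀` with `μ(m₀) = 1`; hypergeometric factors built on `h` and `μ` realise every such value.
-/

open MvPolynomial

noncomputable section

/-- The rational function field `k(X₁,…,X_r)`. -/
abbrev RatFuncField (k : Type*) [Field k] (r : ℕ) : Type _ :=
  FractionRing (MvPolynomial (Fin r) k)

/-- Translation of a polynomial: `(τ_m f)(X) = f(X₁ + m₁, …, X_r + m_r)`. -/
def polyTranslate (k : Type*) [Field k] {r : ℕ} (m : Fin r → ℤ) :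
    MvPolynomial (Fin r) k →ₐ[k] MvPolynomial (Fin r) k :=
  aeval fun i => X i + C ((m i : ℤ) : k)

/-- The canonical map from polynomials into the rational function field. -/
def toRat (k : Type*) [Field k] (r : ℕ) (p : MvPolynomial (Fin r) k) : RatFuncField k r :=
  algebraMap (MvPolynomial (Fin r) k) (RatFuncField k r) p

/-- The integer linear form `μ(X) = n₁X₁ + ⋯ + n_rX_r` as a polynomial. -/
def linForm (k : Type*) [Field k] {r : ℕ} (n : Fin r → ℤ) : MvPolynomial (Fin r) k :=
  ∑ i, C ((n i : ℤ) : k) * X i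

/-- `h(μ(X) + c)`: substitution of the shifted linear form in a univariate polynomial. -/
def hShift (k : Type*) [Field k] {r : ℕ} (h : Polynomial k) (n : Fin r → ℤ) (c : ℤ) :
    MvPolynomial (Fin r) k :=
  Polynomial.aeval (linForm k n + C ((c : ℤ) : k)) h

/-- The hypergeometric factor
`P(j,m) = Π_{ν=0}^{μ(m)−1} h(μ(X)+j+ν)` (resp. `1`, resp.
`Π_{ν=μ(m)}^{−1} h(μ(X)+j+ν)⁻¹`) according to the sign of `μ(m) = Σ nₐmₐ`. -/
def hgFactor (k : Type*) [Field k] {r : ℕ} (h : Polynomial k) (n : Fin r → ℤ)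
    (j : ℤ) (m : Fin r → ℤ) : RatFuncField k r :=
  if 1 ≤ ∑ a, n a * m a then
    toRat k r (∏ ν ∈ Finset.range (∑ a, n a * m a).toNat, hShift k h n (j + ν))
  else if (∑ a, n a * m a) = 0 then 1
  else (toRat k r (∏ ν ∈ Finset.range (-(∑ a, n a * m a)).toNat,
        hShift k h n ((∑ a, n a * m a) + j + ν)))⁻¹

section AbelianGroups

variable {Q A : Type*} [AddCommGroup Q] {ψ : Q → A} {g₁ g₂ : Q}

theorem exists_forall_add_zsmul_notMem (hind : LinearIndependent ℤ ![g₁, g₂]) {F : Set Q}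
    (hF : F.Finite) : ∃ x, ∀ n : ℤ, x + n • g₁ ∉ F := by
  by_contra! hmeets
  choose n hn using fun N : ℤ => hmeets (N • g₂)
  have hinj : Function.Injective fun N : ℤ => N • g₂ + n N • g₁ := fun a b hab => by
    have hzero : (n a - n b) • g₁ + (a - b) • g₂ = 0 := by
      rw [← sub_eq_zero.2 hab]
      module
    exact sub_eq_zero.1 (LinearIndependent.pair_iff.1 hind _ _ hzero).2
  exact Set.infinite_of_injective_forall_mem hinj hn hF

theorem apply_add_zsmul_eq_of_forall_succ {x g : Q}
    (h : ∀ n : ℤ, ψ (x + n • g + g) = ψ (x + n • g)) (n : ℤ) : ψ (x + n • g) = ψ x := by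
  have hper : Function.Periodic (fun n : ℤ => ψ (x + n • g)) 1 := fun n => by
    simpa [add_smul, add_assoc] using h n
  simpa using hper.int_mul_eq n

theorem add_zsmul_injective_of_linearIndependent (hind : LinearIndependent ℤ ![g₁, g₂]) (x : Q) :
    Function.Injective fun n : ℤ => x + n • g₁ :=
  (add_right_injective x).comp (hind.smul_left_injective 0)

theorem exists_forall_finite_add_zsmul_ne (hind : LinearIndependent ℤ ![g₁, g₂])
    (hψ : ∀ g, {x | ψ (x + g) ≠ ψ x}.Finite) :
    ∃ L, ∀ x, {n : ℤ | ψ (x + n • g₁) ≠ L}.Finite := by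
  obtain ⟨y, hy⟩ := exists_forall_add_zsmul_notMem hind (hψ g₁)
  have hconst : ∀ n : ℤ, ψ (y + n • g₁) = ψ y :=
    apply_add_zsmul_eq_of_forall_succ fun n => not_not.1 (hy n)
  refine ⟨ψ y, fun x => ((hψ (x - y)).preimage
    (add_zsmul_injective_of_linearIndependent hind y).injOn).subset fun n hn => ?_⟩
  have htranslate : y + n • g₁ + (x - y) = x + n • g₁ := by abel
  simpa [htranslate, hconst] using hn

-- Every line parallel to `g₁` on which `ψ` is not constantly `L` meets the finite set where
-- `ψ (x + g₁) ≠ ψ x`, and contains only finitely many points where `ψ ≠ L`.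
theorem exists_finite_ne_of_linearIndependent (hind : LinearIndependent ℤ ![g₁, g₂])
    (hψ : ∀ g, {x | ψ (x + g) ≠ ψ x}.Finite) : ∃ L, {x | ψ x ≠ L}.Finite := by
  obtain ⟨L, hL⟩ := exists_forall_finite_add_zsmul_ne hind hψ
  refine ⟨L, ((hψ g₁).biUnion fun y _ => (hL y).image fun n : ℤ => y + n • g₁).subset
    fun x hx => ?_⟩
  obtain ⟨n, hn⟩ : ∃ n : ℤ, ψ (x + n • g₁ + g₁) ≠ ψ (x + n • g₁) := by
    by_contra! hconst
    exact Set.infinite_univ ((hL x).subset fun n _ => by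
      simpa [apply_add_zsmul_eq_of_forall_succ hconst n] using hx)
  exact Set.mem_biUnion hn ⟨-n, by simpa using hx, by simp⟩

theorem infinite_of_nontrivial_of_isAddTorsionFree (Q : Type*) [AddCommGroup Q]
    [IsAddTorsionFree Q] [Nontrivial Q] : Infinite Q :=
  have ⟨_, hx⟩ := exists_ne (0 : Q)
  .of_injective _ (smul_left_injective ℤ hx)

theorem exists_linearIndependent_pair_or_nonempty_linearEquiv_int (Q : Type*) [AddCommGroup Q]
    [IsAddTorsionFree Q] [Nontrivial Q] [Module.Finite ℤ Q] :
    (∃ g₁ g₂ : Q, LinearIndependent ℤ ![g₁, g₂]) ∨ Nonempty (ℤ ≃ₗ[ℤ] Q) := by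
  obtain ⟨x, hx⟩ := exists_ne (0 : Q)
  rcases (Nat.one_le_iff_ne_zero.2 (Module.finrank_pos (R := ℤ) (M := Q)).ne').eq_or_lt with h | h
  · exact .inr (Module.nonempty_linearEquiv_of_finrank_eq_one h.symm)
  · exact .inl ⟨x, exists_linearIndependent_pair_of_one_lt_finrank h hx⟩

theorem isAddTorsionFree_quotient {H : AddSubgroup Q}
    (h : ∀ n : ℤ, n ≠ 0 → ∀ x, n • x ∈ H → x ∈ H) : IsAddTorsionFree (Q ⧸ H) := by
  refine Module.isTorsionFree_int_iff_isAddTorsionFree.1 (.of_smul_eq_zero fun n q hq => ?_)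
  induction q using QuotientAddGroup.induction_on with | _ x
  refine or_iff_not_imp_left.2 fun hn => ?_
  exact (QuotientAddGroup.eq_zero_iff x).2 (h n hn x ((QuotientAddGroup.eq_zero_iff _).1 hq))

theorem exists_linearIndependent_pair_or_eq_ker_dotProduct {ι : Type*} [Fintype ι]
    (H : AddSubgroup (ι → ℤ)) [IsAddTorsionFree ((ι → ℤ) ⧸ H)] [Nontrivial ((ι → ℤ) ⧸ H)] :
    (∃ g₁ g₂ : (ι → ℤ) ⧸ H, LinearIndependent ℤ ![g₁, g₂]) ∨
      ∃ n m₀ : ι → ℤ, n ⬝ᵥ m₀ = 1 ∧ ∀ m, m ∈ H ↔ n ⬝ᵥ m = 0 := by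
  classical
  let π := (QuotientAddGroup.mk' H).toIntLinearMap
  have hπ : Function.Surjective π := QuotientAddGroup.mk'_surjective H
  have : Module.Finite ℤ ((ι → ℤ) ⧸ H) := .of_surjective π hπ
  refine (exists_linearIndependent_pair_or_nonempty_linearEquiv_int _).imp_right fun ⟨e⟩ => ?_
  obtain ⟨m₀, hm₀⟩ := hπ (e 1)
  have hn : ∀ m, (dotProductEquiv ℤ ι).symm (e.symm.toLinearMap ∘ₗ π) ⬝ᵥ m = e.symm (π m) :=
    LinearMap.congr_fun ((dotProductEquiv ℤ ι).apply_symm_apply (e.symm.toLinearMap ∘ₗ π))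
  refine ⟨_, m₀, (hn m₀).trans (by rw [hm₀, e.symm_apply_apply]), fun m => ?_⟩
  rw [hn, map_eq_zero_iff _ e.symm.injective]
  exact (QuotientAddGroup.eq_zero_iff m).symm

end AbelianGroups

section Cocycles

variable {G A : Type*} [AddGroup G] [CommGroup A]

/-- The 1-cocycles of the additive group `G` with values in `A`, on which `g : G` acts
through `ρ g`. -/
@[to_additive]
def mulCocycles (ρ : G → A →* A) : Subgroup (G → A) where
  carrier := {b | ∀ g g', b (g + g') = ρ g (b g') * b g}
  one_mem' g g' := by simp
  mul_mem' hb hc g g' := by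
    simp only [Pi.mul_apply, hb g g', hc g g', map_mul, mul_mul_mul_comm]
  inv_mem' hb g g' := by
    simp only [Pi.inv_apply, hb g g', map_inv, mul_inv]

theorem coboundary_mem_mulCocycles {ρ : G → A →* A}
    (hρ : ∀ g g' a, ρ (g + g') a = ρ g (ρ g' a)) (a : A) :
    (fun g => ρ g a / a) ∈ mulCocycles ρ := fun g g' => by
  simp only [hρ, map_div, div_mul_div_cancel]

end Cocycles

section PermutationCocycles

open AddAction QuotientAddGroup

/-- The 1-cocycles of `G` with values in the permutation module `ℤ[S]`. -/
abbrev permCocycles (G S : Type*) [AddGroup G] [AddAction G S] : AddSubgroup (G → S →₀ ℤ) :=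
  addCocycles fun g => Finsupp.mapDomain.addMonoidHom (g +ᵥ ·)

theorem mapDomain_vadd_apply {G S M : Type*} [AddGroup G] [AddAction G S] [AddCommMonoid M]
    (g : G) (f : S →₀ M) (s : S) : f.mapDomain (g +ᵥ ·) s = f (-g +ᵥ s) :=
  Finsupp.mapDomain_equiv_apply (f := toPerm g) f s

section AddGroup

variable {G S : Type*} [AddGroup G] [AddAction G S] {β : G → S →₀ ℤ}

theorem permCocycle_add_apply (hβ : β ∈ permCocycles G S) (g g' : G) (s : S) :
    β (g + g') s = β g' (-g +ᵥ s) + β g s := by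
  rw [hβ g g', Finsupp.add_apply, Finsupp.mapDomain.addMonoidHom_apply, mapDomain_vadd_apply]

theorem permCocycle_zero (hβ : β ∈ permCocycles G S) : β 0 = 0 := by
  ext s
  simpa using permCocycle_add_apply hβ 0 0 s

theorem permCocycle_eq_zero_of_closure_eq_top (hβ : β ∈ permCocycles G S) {t : Set G}
    (ht : AddSubgroup.closure t = ⊤) (hzero : ∀ g ∈ t, β g = 0) : β = 0 := by
  funext g
  induction ht ▸ AddSubgroup.mem_top g using AddSubgroup.closure_induction with
  | mem g hg => exact hzero g hg
  | zero => exact permCocycle_zero hβ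
  | add g g' _ _ hg hg' =>
    ext s
    simp [permCocycle_add_apply hβ, hg, hg']
  | neg g _ hg =>
    ext s
    simpa [permCocycle_zero hβ, hg] using (permCocycle_add_apply hβ (-g) g s).symm

theorem permCocycle_eq_zero_of_cyclic_quotient (hβ : β ∈ permCocycles G S) {H : AddSubgroup G}
    {g₀ : G} (hgen : ∀ g, ∃ c : ℤ, g - c • g₀ ∈ H) (hH : ∀ t ∈ H, β t = 0) (h₀ : β g₀ = 0) :
    β = 0 := by
  refine permCocycle_eq_zero_of_closure_eq_top hβ (t := insert g₀ H)
    (AddSubgroup.eq_top_iff' _ |>.2 fun g => ?_) ?_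
  · obtain ⟨c, hc⟩ := hgen g
    rw [← sub_add_cancel g (c • g₀)]
    exact add_mem (AddSubgroup.subset_closure (.inr hc))
      (zsmul_mem (AddSubgroup.subset_closure (.inl rfl)) c)
  · rintro g (rfl | hg)
    · exact h₀
    · exact hH g hg

theorem filter_mem_permCocycles (hβ : β ∈ permCocycles G S) {p : S → Prop}
    [DecidablePred p] (hp : ∀ (g : G) s, p (g +ᵥ s) ↔ p s) :
    (fun g => (β g).filter p) ∈ permCocycles G S :=
  fun g g' => by
    ext s
    simp [Finsupp.filter_apply, mapDomain_vadd_apply, permCocycle_add_apply hβ, hp, ite_add_ite]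

theorem exists_finset_orbits [AddGroup.FG G] (hβ : β ∈ permCocycles G S) :
    ∃ Ω : Finset (orbitRel.Quotient G S), ∀ g s, β g s ≠ 0 → ⟦s⟧ ∈ Ω := by
  classical
  obtain ⟨t, ht⟩ := AddGroup.FG.out (H := G)
  let Ω : Finset (orbitRel.Quotient G S) := t.biUnion fun g => (β g).support.image (⟦·⟧)
  have hβΩ : (fun g => (β g).filter fun s => ⟦s⟧ ∉ Ω) = 0 := by
    refine permCocycle_eq_zero_of_closure_eq_top (filter_mem_permCocycles hβ fun g s => ?_) ht
      fun g hg => ?_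
    · rw [Quotient.sound (s := orbitRel G S) (orbitRel_apply.2 (mem_orbit s g))]
    · refine Finsupp.filter_eq_zero_iff _ _ |>.2 fun s hs => by_contra fun hgs => hs ?_
      exact Finset.mem_biUnion.2 ⟨g, hg, Finset.mem_image_of_mem _ (Finsupp.mem_support_iff.2 hgs)⟩
  refine ⟨Ω, fun g s hs => by_contra fun hsΩ => hs ?_⟩
  exact (Finsupp.filter_eq_zero_iff _ _).1 (congrFun hβΩ g) s hsΩ

theorem permCocycle_orbit_induction [AddGroup.FG G] {P : (G → S →₀ ℤ) → Prop} (zero : P 0)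
    (add : ∀ β γ, P β → P γ → P (β + γ))
    (orbit : ∀ s₀, ∀ β ∈ permCocycles G S, (∀ g, ∀ s ∉ orbit G s₀, β g s = 0) → P β)
    (hβ : β ∈ permCocycles G S) : P β := by
  classical
  obtain ⟨Ω, hΩ⟩ := exists_finset_orbits hβ
  have hsum : β = ∑ ω ∈ Ω, fun g => (β g).filter (⟦·⟧ = ω) := by
    ext g s
    simpa [Finsupp.finsetSum_apply, Finsupp.filter_apply] using fun h => not_imp_comm.1 (hΩ g s) h
  rw [hsum]
  refine Finset.sum_induction _ P add zero fun ω _ => ?_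
  induction ω using Quotient.inductionOn with | _ s₀
  refine orbit s₀ _ (filter_mem_permCocycles hβ fun g s => ?_) fun g s hs => ?_
  · rw [Quotient.sound (s := orbitRel G S) (orbitRel_apply.2 (mem_orbit s g))]
  · exact Finsupp.filter_apply_neg _ _ fun h => hs (orbitRel_apply.1 (Quotient.exact h))

end AddGroup

variable {G S : Type*} [AddCommGroup G] [AddAction G S] {β : G → S →₀ ℤ} {s₀ : S}

theorem orbit_infinite_iff : (orbit G s₀).Infinite ↔ Infinite (G ⧸ stabilizer G s₀) :=
  Set.infinite_coe_iff.symm.trans (orbitEquivQuotientStabilizer G s₀).infinite_iff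

theorem vadd_eq_of_mem_orbit {t : G} (ht : t ∈ stabilizer G s₀) {s : S} (hs : s ∈ orbit G s₀) :
    t +ᵥ s = s := by
  obtain ⟨g, rfl⟩ := hs
  simp only [vadd_comm t g s₀, mem_stabilizer_iff.1 ht]

theorem exists_zsmul_vadd_eq_of_mem_orbit {g₀ : G}
    (hgen : ∀ g, ∃ c : ℤ, g - c • g₀ ∈ stabilizer G s₀) {s : S} (hs : s ∈ orbit G s₀) :
    ∃ c : ℤ, c • g₀ +ᵥ s₀ = s := by
  obtain ⟨g, rfl⟩ := hs
  obtain ⟨c, hc⟩ := hgen g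
  exact ⟨c, (congrArg (c • g₀ +ᵥ ·) (mem_stabilizer_iff.1 hc).symm).trans (by
    simp only [← add_vadd, add_sub_cancel])⟩

theorem zsmul_vadd_injective {g₀ : G} (hfree : ∀ c : ℤ, c • g₀ ∈ stabilizer G s₀ → c = 0) :
    Function.Injective fun c : ℤ => c • g₀ +ᵥ s₀ := fun c c' hc => by
  refine sub_eq_zero.1 (hfree _ (mem_stabilizer_iff.2 ?_))
  rw [sub_zsmul, add_comm, add_vadd, neg_vadd_eq_iff]
  exact hc

theorem permCocycle_apply_eq_zero_of_mem_stabilizer (hβ : β ∈ permCocycles G S)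
    (hinf : (orbit G s₀).Infinite) {t : G} (ht : t ∈ stabilizer G s₀) {s : S}
    (hs : s ∈ orbit G s₀) : β t s = 0 := by
  have hconst : ∀ g : G, β t (g +ᵥ s) = β t s := fun g => by
    have hcomm := congrArg (β · s) (add_comm t (-g))
    simp only [permCocycle_add_apply hβ, neg_neg,
      vadd_eq_of_mem_orbit (neg_mem ht) hs] at hcomm
    linarith
  by_contra hts
  refine hinf ((β t).support.finite_toSet.subset fun s' hs' => ?_)
  obtain ⟨g, rfl⟩ := (orbit_eq_iff.2 hs).symm ▸ hs'
  simpa [hconst] using hts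

theorem permCocycle_eq_zero_of_mem_stabilizer (hβ : β ∈ permCocycles G S)
    (hsupp : ∀ g, ∀ s ∉ orbit G s₀, β g s = 0) (hinf : (orbit G s₀).Infinite) {t : G}
    (ht : t ∈ stabilizer G s₀) : β t = 0 := by
  ext s
  by_cases hs : s ∈ orbit G s₀
  · exact permCocycle_apply_eq_zero_of_mem_stabilizer hβ hinf ht hs
  · exact hsupp t s hs

theorem exists_permCocycle_apply_eq_sub (hβ : β ∈ permCocycles G S) (hinf : (orbit G s₀).Infinite) :
    ∃ ψ : G ⧸ stabilizer G s₀ → ℤ,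
      ∀ g q, β g (ofQuotientStabilizer G s₀ q) = ψ (q - g) - ψ q := by
  have hwd : ∀ a b : G, leftRel (stabilizer G s₀) a b → β (-a) s₀ = β (-b) s₀ := fun a b hab => by
    have hmem : a - b ∈ stabilizer G s₀ := by
      simpa [sub_eq_neg_add] using neg_mem (leftRel_apply.1 hab)
    rw [show -b = a - b + -a by abel, permCocycle_add_apply hβ,
      vadd_eq_of_mem_orbit (neg_mem hmem) (mem_orbit_self s₀),
      permCocycle_apply_eq_zero_of_mem_stabilizer hβ hinf hmem (mem_orbit_self s₀), add_zero]
  refine ⟨Quotient.lift (fun g => β (-g) s₀) hwd, fun g q => ?_⟩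
  induction q using QuotientAddGroup.induction_on with | _ a
  have hadd := permCocycle_add_apply hβ (-a) g s₀
  rw [neg_neg] at hadd
  change β g (a +ᵥ s₀) = β (-(a - g)) s₀ - β (-a) s₀
  rw [neg_sub, sub_eq_neg_add g a, hadd, add_sub_cancel_right]

theorem exists_eq_coboundary_of_linearIndependent (hβ : β ∈ permCocycles G S)
    (hsupp : ∀ g, ∀ s ∉ orbit G s₀, β g s = 0) {g₁ g₂ : G ⧸ stabilizer G s₀}
    (hind : LinearIndependent ℤ ![g₁, g₂]) :
    ∃ f : S →₀ ℤ, ∀ g, β g = f.mapDomain (g +ᵥ ·) - f := by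
  let ι := ofQuotientStabilizer G s₀
  have hι : Function.Injective ι := injective_ofQuotientStabilizer G s₀
  have : Infinite (G ⧸ stabilizer G s₀) :=
    .of_injective _ (add_zsmul_injective_of_linearIndependent hind 0)
  obtain ⟨ψ, hψ⟩ := exists_permCocycle_apply_eq_sub hβ (orbit_infinite_iff.2 this)
  have hfin : ∀ q, {x | ψ (x + q) ≠ ψ x}.Finite := fun q => by
    induction q using QuotientAddGroup.induction_on with | _ g
    refine ((β (-g)).support.finite_toSet.preimage hι.injOn).subset fun x hx => ?_
    simpa [ι, hψ, sub_eq_zero] using hx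
  obtain ⟨L, hL⟩ := exists_finite_ne_of_linearIndependent hind hfin
  let φ : G ⧸ stabilizer G s₀ →₀ ℤ := .ofSupportFinite (ψ · - L) (hL.subset fun x hx => by
    simpa [sub_eq_zero] using hx)
  refine ⟨φ.mapDomain ι, fun g => Finsupp.ext fun s => ?_⟩
  rw [Finsupp.sub_apply, mapDomain_vadd_apply]
  by_cases hs : s ∈ orbit G s₀
  · obtain ⟨q, rfl⟩ : ∃ q, ι q = s := have ⟨a, ha⟩ := hs; ⟨a, ha⟩
    have htranslate : -g +ᵥ ι q = ι (q - g) := by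
      rw [sub_eq_neg_add]
      exact (ofQuotientStabilizer_vadd G s₀ (-g) q).symm
    rw [htranslate, Finsupp.mapDomain_apply hι, Finsupp.mapDomain_apply hι, hψ]
    exact (sub_sub_sub_cancel_right _ _ L).symm
  · have hnotin : ∀ s ∉ orbit G s₀, φ.mapDomain ι s = 0 := fun s hs =>
      Finsupp.mapDomain_of_notMem_range _ _ fun ⟨q, hq⟩ =>
        hs (hq ▸ ofQuotientStabilizer_mem_orbit G s₀ q)
    have hgs : -g +ᵥ s ∉ orbit G s₀ := fun h => hs (by simpa using mem_orbit_of_mem_orbit g h)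
    rw [hsupp g s hs, hnotin s hs, hnotin _ hgs, sub_zero]

end PermutationCocycles

section PrimeDivisors

/-- The irreducible elements of `R` up to units. -/
abbrev PrimeDivisor (R : Type*) [CommRing R] : Type _ := {a : Associates R // Irreducible a}

namespace PrimeDivisor

variable {R : Type*} [CommRing R]

/-- The class of an irreducible element. -/
def mk (p : R) (hp : Irreducible p) : PrimeDivisor R := ⟨.mk p, Associates.irreducible_mk.2 hp⟩

theorem mk_eq_mk_iff {p q : R} {hp : Irreducible p} {hq : Irreducible q} :
    mk p hp = mk q hq ↔ Associated p q :=
  Subtype.ext_iff.trans Associates.mk_eq_mk_iff_associated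

theorem exists_mk_eq (s : PrimeDivisor R) : ∃ p hp, mk p hp = s := by
  obtain ⟨a, ha⟩ := s
  obtain ⟨p, rfl⟩ := Associates.mk_surjective a
  exact ⟨p, Associates.irreducible_mk.1 ha, rfl⟩

/-- The permutation of the prime divisors induced by a ring automorphism. -/
def map (σ : R ≃+* R) (s : PrimeDivisor R) : PrimeDivisor R :=
  ⟨Quotient.map σ (fun _ _ h => Associated.map σ h) s.1, by
    obtain ⟨p, hp, rfl⟩ := s.exists_mk_eq
    exact Associates.irreducible_mk.2 ((MulEquiv.irreducible_iff σ).2 hp)⟩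

theorem map_mk (σ : R ≃+* R) {p : R} (hp : Irreducible p) :
    map σ (mk p hp) = mk (σ p) ((MulEquiv.irreducible_iff σ).2 hp) := rfl

end PrimeDivisor

variable {R : Type*} [CommRing R] [UniqueFactorizationMonoid R]

open Classical in
/-- The prime factorization of an element of `R`; the value at `0` is junk. -/
def factorDivisor (a : R) : PrimeDivisor R →₀ ℤ :=
  (Multiset.toFinsupp (Associates.factors' a)).mapRange (↑) Nat.cast_zero

theorem factorDivisor_eq_iff {a b : R} (ha : a ≠ 0) (hb : b ≠ 0) :
    factorDivisor a = factorDivisor b ↔ Associated a b := by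
  classical
  rw [factorDivisor, factorDivisor, (Finsupp.mapRange_injective _ _ Nat.cast_injective).eq_iff,
    Multiset.toFinsupp.injective.eq_iff, ← Associates.mk_eq_mk_iff_associated,
    ← WithTop.coe_inj, ← Associates.factors_mk a ha, ← Associates.factors_mk b hb]
  exact ⟨Associates.eq_of_factors_eq_factors, congrArg _⟩

variable [IsDomain R]

theorem factorDivisor_mul {a b : R} (ha : a ≠ 0) (hb : b ≠ 0) :
    factorDivisor (a * b) = factorDivisor a + factorDivisor b := by
  have h : Associates.factors' (a * b) = Associates.factors' a + Associates.factors' b :=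
    WithTop.coe_injective <| by
      rw [WithTop.coe_add, ← Associates.factors_mk a ha, ← Associates.factors_mk b hb,
        ← Associates.factors_mul, Associates.mk_mul_mk, Associates.factors_mk _ (mul_ne_zero ha hb)]
  rw [factorDivisor, h, map_add]
  exact Finsupp.mapRange_add Nat.cast_add _ _

theorem factorDivisor_irreducible {p : R} (hp : Irreducible p) :
    factorDivisor p = .single (PrimeDivisor.mk p hp) 1 := by
  have h : Associates.factors' p = {PrimeDivisor.mk p hp} := WithTop.coe_injective <| by
    rw [← Associates.factors_mk p hp.ne_zero,
      Associates.factors_self (Associates.irreducible_mk.2 hp)]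
    rfl
  simp [factorDivisor, h]

theorem factorDivisor_of_isUnit {u : R} (hu : IsUnit u) : factorDivisor u = 0 := by
  have h := factorDivisor_mul hu.ne_zero one_ne_zero
  rwa [mul_one, left_eq_add, ← (factorDivisor_eq_iff hu.ne_zero one_ne_zero).2
    (associated_one_iff_isUnit.2 hu)] at h

theorem factorDivisor_map (σ : R ≃+* R) {a : R} (ha : a ≠ 0) :
    factorDivisor (σ a) = (factorDivisor a).mapDomain (.map σ) := by
  induction a using WfDvdMonoid.induction_on_irreducible with
  | zero => exact absurd rfl ha
  | unit u hu =>
    rw [factorDivisor_of_isUnit hu, factorDivisor_of_isUnit (hu.map σ), Finsupp.mapDomain_zero]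
  | mul a p ha₀ hp ih =>
    have hσp : Irreducible (σ p) := (MulEquiv.irreducible_iff σ).2 hp
    rw [map_mul, factorDivisor_mul hσp.ne_zero ((map_ne_zero_iff σ σ.injective).2 ha₀),
      factorDivisor_mul hp.ne_zero ha₀, ih ha₀, Finsupp.mapDomain_add, factorDivisor_irreducible hp,
      factorDivisor_irreducible hσp, Finsupp.mapDomain_single, PrimeDivisor.map_mk]

variable {K : Type*} [Field K] [Algebra R K] [IsFractionRing R K]

theorem factorDivisor_num_sub_den {x : K} {a b : R} (ha : a ≠ 0) (hb : b ≠ 0)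
    (h : x * algebraMap R K b = algebraMap R K a) :
    factorDivisor (IsFractionRing.num R x) - factorDivisor (IsFractionRing.den R x : R) =
      factorDivisor a - factorDivisor b := by
  have hden : (IsFractionRing.den R x : R) ≠ 0 := nonZeroDivisors.coe_ne_zero _
  have hcross : IsFractionRing.num R x * b = a * IsFractionRing.den R x :=
    IsFractionRing.injective R K <| by
      rw [map_mul, map_mul, ← h, ← IsFractionRing.num_mul_den_eq_num_iff_eq.2 (rfl : x = x)]
      ring
  have hnum : IsFractionRing.num R x ≠ 0 :=
    left_ne_zero_of_mul (hcross ▸ mul_ne_zero ha hden)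
  rw [sub_eq_sub_iff_add_eq_add, ← factorDivisor_mul hnum hb, hcross, factorDivisor_mul ha hden]

variable (R) in
theorem exists_mul_algebraMap_eq (x : Kˣ) :
    ∃ a b : R, a ≠ 0 ∧ b ≠ 0 ∧ x * algebraMap R K b = algebraMap R K a :=
  ⟨_, _, (IsFractionRing.num_eq_zero (x : K)).not.2 x.ne_zero, nonZeroDivisors.coe_ne_zero _,
    IsFractionRing.num_mul_den_eq_num_iff_eq.2 rfl⟩

variable (R) in
/-- The divisor of a nonzero element of the fraction field of `R`. -/
def divisor : Kˣ →* Multiplicative (PrimeDivisor R →₀ ℤ) :=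
  .mk' (fun x => .ofAdd (factorDivisor (IsFractionRing.num R (x : K)) -
    factorDivisor (IsFractionRing.den R (x : K) : R))) fun x y => by
    obtain ⟨a, b, ha, hb, hx⟩ := exists_mul_algebraMap_eq R x
    obtain ⟨c, d, hc, hd, hy⟩ := exists_mul_algebraMap_eq R y
    have hxy : (↑(x * y) : K) * algebraMap R K (b * d) = algebraMap R K (a * c) := by
      rw [map_mul, map_mul, ← hx, ← hy, Units.val_mul, mul_mul_mul_comm]
    rw [← ofAdd_add, factorDivisor_num_sub_den ha hb hx, factorDivisor_num_sub_den hc hd hy,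
      factorDivisor_num_sub_den (mul_ne_zero ha hc) (mul_ne_zero hb hd) hxy,
      factorDivisor_mul ha hc, factorDivisor_mul hb hd, add_sub_add_comm]

theorem toAdd_divisor {x : Kˣ} {a b : R} (ha : a ≠ 0) (hb : b ≠ 0)
    (h : x * algebraMap R K b = algebraMap R K a) :
    (divisor R x).toAdd = factorDivisor a - factorDivisor b :=
  factorDivisor_num_sub_den ha hb h

theorem toAdd_divisor_irreducible {x : Kˣ} {p : R} (hp : Irreducible p)
    (hx : x = algebraMap R K p) :
    (divisor R x).toAdd = .single (PrimeDivisor.mk p hp) 1 := by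
  rw [toAdd_divisor hp.ne_zero one_ne_zero (by rw [hx, map_one, mul_one]),
    factorDivisor_irreducible hp, factorDivisor_of_isUnit isUnit_one, sub_zero]

theorem divisor_surjective : Function.Surjective (divisor R (K := K)) := fun f => by
  rw [← MonoidHom.mem_range, ← ofAdd_toAdd f]
  induction f.toAdd using Finsupp.induction_linear with
  | zero => exact one_mem _
  | add f g hf hg => exact mul_mem hf hg
  | single s n =>
    obtain ⟨p, hp, rfl⟩ := s.exists_mk_eq
    have hp₀ : algebraMap R K p ≠ 0 := by simpa using hp.ne_zero
    refine ⟨Units.mk0 _ hp₀ ^ n, Multiplicative.toAdd.injective ?_⟩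
    rw [map_zpow, toAdd_zpow, toAdd_divisor_irreducible hp rfl, Finsupp.smul_single_one]
    rfl

theorem exists_eq_algebraMap_of_divisor_eq_one {x : Kˣ} (h : divisor R x = 1) :
    ∃ u : Rˣ, x = algebraMap R K u := by
  obtain ⟨a, b, ha, hb, hx⟩ := exists_mul_algebraMap_eq R x
  rw [← toAdd_eq_zero, toAdd_divisor ha hb hx, sub_eq_zero, factorDivisor_eq_iff ha hb] at h
  obtain ⟨u, rfl⟩ := h.symm
  exact ⟨u, mul_right_cancel₀ (by simpa using hb) (hx.trans (by rw [map_mul, mul_comm]))⟩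

theorem toAdd_divisor_map {τ : K →+* K} {σ : R ≃+* R}
    (h : ∀ a, τ (algebraMap R K a) = algebraMap R K (σ a)) (x : Kˣ) :
    (divisor R (Units.map (τ : K →* K) x)).toAdd = (divisor R x).toAdd.mapDomain (.map σ) := by
  obtain ⟨a, b, ha, hb, hx⟩ := exists_mul_algebraMap_eq R x
  have hσ : ∀ {c : R}, c ≠ 0 → σ c ≠ 0 := (map_ne_zero_iff σ σ.injective).2
  have hτx : (Units.map (τ : K →* K) x : K) * algebraMap R K (σ b) = algebraMap R K (σ a) := by
    rw [← h, ← h, ← hx, map_mul]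
    rfl
  rw [toAdd_divisor ha hb hx, toAdd_divisor (hσ ha) (hσ hb) hτx, factorDivisor_map σ ha,
    factorDivisor_map σ hb, Finsupp.mapDomain_sub]

end PrimeDivisors

section Translations

variable {k : Type*} [Field k] {r : ℕ}

theorem eval_polyTranslate (m : Fin r → ℤ) (p : MvPolynomial (Fin r) k) (x : Fin r → k) :
    eval x (polyTranslate k m p) = eval (fun i => x i + (m i : k)) p := by
  simp only [← coe_aeval_eq_eval, RingHom.coe_coe]
  rw [← AlgHom.comp_apply]
  congr 1
  ext i
  simp [polyTranslate]

theorem polyTranslate_zero (p : MvPolynomial (Fin r) k) : polyTranslate k 0 p = p := by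
  simp [polyTranslate]

theorem polyTranslate_add (m m' : Fin r → ℤ) (p : MvPolynomial (Fin r) k) :
    polyTranslate k (m + m') p = polyTranslate k m (polyTranslate k m' p) := by
  rw [← AlgHom.comp_apply]
  congr 1
  ext i
  simp [polyTranslate, add_assoc]

/-- The translation by `m` as an automorphism. -/
def translationEquiv (k : Type*) [Field k] {r : ℕ} (m : Fin r → ℤ) :
    MvPolynomial (Fin r) k ≃+* MvPolynomial (Fin r) k :=
  RingEquiv.ofRingHom (polyTranslate k m) (polyTranslate k (-m))
    (RingHom.ext fun p => by simp [← polyTranslate_add, polyTranslate_zero])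
    (RingHom.ext fun p => by simp [← polyTranslate_add, polyTranslate_zero])

theorem funext_intCast {σ R : Type*} [CommRing R] [IsDomain R] [CharZero R]
    {p q : MvPolynomial σ R}
    (h : ∀ x : σ → ℤ, eval (fun i => (x i : R)) p = eval (fun i => (x i : R)) q) : p = q := by
  refine funext_set (fun _ => Set.range ((↑) : ℤ → R))
    (fun _ => Set.infinite_range_of_injective Int.cast_injective) fun x hx => ?_
  choose y hy using fun i => hx i trivial
  obtain rfl : (fun i => (y i : R)) = x := funext hy
  exact h y

/-- The restriction of a polynomial to the line `t ↦ x + t v`. -/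
def lineRestrict {σ R : Type*} [CommSemiring R] (x v : σ → R) :
    MvPolynomial σ R →ₐ[R] Polynomial R :=
  aeval fun i => Polynomial.C (x i) + Polynomial.C (v i) * Polynomial.X

theorem eval_lineRestrict {σ R : Type*} [CommSemiring R] (x v : σ → R) (p : MvPolynomial σ R)
    (t : R) : (lineRestrict x v p).eval t = eval (fun i => x i + v i * t) p := by
  simp only [← Polynomial.coe_aeval_eq_eval, ← coe_aeval_eq_eval, RingHom.coe_coe]
  rw [← AlgHom.comp_apply]
  congr 1
  ext i
  simp [lineRestrict]

theorem eq_C_of_taylor_eq_C_mul {R : Type*} [CommRing R] [IsDomain R] [CharZero R]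
    {q : Polynomial R} {a c : R} (ha : a ≠ 0) (h : q.taylor a = Polynomial.C c * q) :
    q = Polynomial.C (q.eval 0) := by
  rcases eq_or_ne q 0 with rfl | hq
  · simp
  have hc : c = 1 := by
    have hlead := congrArg Polynomial.leadingCoeff h
    rw [Polynomial.leadingCoeff_taylor, Polynomial.leadingCoeff_mul, Polynomial.leadingCoeff_C,
      right_eq_mul₀ (Polynomial.leadingCoeff_ne_zero.2 hq)] at hlead
    exact hlead
  have hper : Function.Periodic (q.eval ·) a := fun t => by
    simpa [hc, Polynomial.taylor_eval] using congrArg (Polynomial.eval t) h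
  refine Polynomial.eq_of_infinite_eval_eq _ _ ((Set.infinite_range_of_injective
    (smul_left_injective ℤ ha)).mono ?_)
  rintro _ ⟨j, rfl⟩
  simpa using hper.int_mul_eq j

variable [CharZero k]

theorem polyTranslate_eq_self_of_associated {p : MvPolynomial (Fin r) k} {m : Fin r → ℤ} {N : ℤ}
    (hN : N ≠ 0) (h : Associated p (polyTranslate k (N • m) p)) : polyTranslate k m p = p := by
  obtain ⟨u, hu⟩ := h
  obtain ⟨c, -, hc⟩ := isUnit_iff_eq_C_of_isReduced.1 u.isUnit
  refine funext_intCast fun x => ?_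
  let q := lineRestrict (fun i => (x i : k)) (fun i => (m i : k)) p
  have htaylor : q.taylor (N : k) = Polynomial.C c * q := Polynomial.funext fun t => by
    have heval := congrArg (eval fun i => (x i : k) + m i * t) hu
    rw [hc, map_mul, eval_C, eval_polyTranslate] at heval
    rw [Polynomial.taylor_eval, Polynomial.eval_mul, Polynomial.eval_C, eval_lineRestrict,
      eval_lineRestrict, mul_comm c, heval]
    congr 2
    funext i
    simp
    ring
  have hconst : q.eval 1 = q.eval 0 := by
    rw [eq_C_of_taylor_eq_C_mul (Int.cast_ne_zero.2 hN) htaylor, Polynomial.eval_C,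
      Polynomial.eval_C]
  rw [eval_lineRestrict, eval_lineRestrict] at hconst
  simpa [eval_polyTranslate] using hconst

theorem exists_polyTranslate_ne {p : MvPolynomial (Fin r) k} (hp : Irreducible p) :
    ∃ m : Fin r → ℤ, polyTranslate k m p ≠ p := by
  by_contra! hfixed
  have hconst : p = C (eval (fun _ => 0) p) := funext_intCast fun x => by
    have heval := congrArg (eval fun _ => 0) (hfixed x)
    rw [eval_polyTranslate] at heval
    simpa only [zero_add, eval_C] using heval
  have hne : eval (fun _ => 0) p ≠ 0 := fun h => hp.ne_zero (by rw [hconst, h, C_0])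
  exact hp.not_isUnit (hconst ▸ (isUnit_iff_ne_zero.2 hne).map C)

end Translations

section LinearForms

variable {k : Type*} [Field k] {r : ℕ} {n m₀ : Fin r → ℤ}

theorem eval_hShift (h : Polynomial k) (n : Fin r → ℤ) (c : ℤ) (x : Fin r → k) :
    eval x (hShift k h n c) = h.eval (∑ i, (n i : k) * x i + c) := by
  rw [hShift, ← coe_aeval_eq_eval, RingHom.coe_coe, ← Polynomial.aeval_algHom_apply]
  simp [linForm]

theorem polyTranslate_hShift (h : Polynomial k) (n : Fin r → ℤ) (c : ℤ) (m : Fin r → ℤ) :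
    polyTranslate k m (hShift k h n c) = hShift k h n (c + n ⬝ᵥ m) := by
  rw [hShift, ← Polynomial.aeval_algHom_apply, hShift]
  congr 2
  simp [polyTranslate, linForm, dotProduct, mul_add, Finset.sum_add_distrib]
  ring

variable [CharZero k]

theorem lineRestrict_hShift_zero (hm₀ : n ⬝ᵥ m₀ = 1) (h : Polynomial k) :
    lineRestrict 0 (fun i => (m₀ i : k)) (hShift k h n 0) = h := by
  refine Polynomial.funext fun t => ?_
  have hone : ∑ i, (n i : k) * m₀ i = 1 := by exact_mod_cast congrArg (Int.cast (R := k)) hm₀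
  rw [eval_lineRestrict, eval_hShift]
  simp [← mul_assoc, ← Finset.sum_mul, hone]

theorem hShift_ne_zero (hm₀ : n ⬝ᵥ m₀ = 1) {h : Polynomial k} (hh : h ≠ 0) (c : ℤ) :
    hShift k h n c ≠ 0 := fun hzero => hh <| by
  have hshift : polyTranslate k (-c • m₀) (hShift k h n c) = hShift k h n 0 := by
    rw [polyTranslate_hShift, dotProduct_smul, hm₀, smul_eq_mul, mul_one, add_neg_cancel]
  rw [← lineRestrict_hShift_zero hm₀ h, ← hshift, hzero, map_zero, map_zero]

theorem hShift_lineRestrict (hm₀ : n ⬝ᵥ m₀ = 1) {p : MvPolynomial (Fin r) k}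
    (hp : ∀ m, n ⬝ᵥ m = 0 → polyTranslate k m p = p) (c : ℤ) :
    hShift k (lineRestrict 0 (fun i => (m₀ i : k)) p) n c = polyTranslate k (c • m₀) p := by
  refine funext_intCast fun x => ?_
  have hker : n ⬝ᵥ (x - (n ⬝ᵥ x) • m₀) = 0 := by
    rw [dotProduct_sub, dotProduct_smul, hm₀, smul_eq_mul, mul_one, sub_self]
  have hdot : ∑ i, (n i : k) * x i = (n ⬝ᵥ x : ℤ) := by simp [dotProduct]
  rw [eval_hShift, eval_lineRestrict, hdot, ← hp _ hker, eval_polyTranslate, hp _ hker,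
    eval_polyTranslate]
  congr 2
  funext i
  simp
  ring

theorem irreducible_lineRestrict (hm₀ : n ⬝ᵥ m₀ = 1) {p : MvPolynomial (Fin r) k}
    (hp : ∀ m, n ⬝ᵥ m = 0 → polyTranslate k m p = p) (hirr : Irreducible p) :
    Irreducible (lineRestrict 0 (fun i => (m₀ i : k)) p) := by
  let φ : Polynomial k →ₐ[k] MvPolynomial (Fin r) k :=
    Polynomial.aeval (linForm k n + C ((0 : ℤ) : k))
  have : IsLocalHom φ := isLocalHom_of_leftInverse
    (lineRestrict (0 : Fin r → k) fun i => (m₀ i : k)) (lineRestrict_hShift_zero hm₀)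
  have hφ : φ (lineRestrict 0 (fun i => (m₀ i : k)) p) = p :=
    (hShift_lineRestrict hm₀ hp 0).trans (by rw [zero_smul, polyTranslate_zero])
  exact .of_map (f := φ) (hφ.symm ▸ hirr)

end LinearForms

section TranslationAction

open AddAction

variable {k : Type*} [Field k] {r : ℕ}

/-- Translations permute the irreducible polynomials up to constants. -/
instance : AddAction (Fin r → ℤ) (PrimeDivisor (MvPolynomial (Fin r) k)) where
  vadd m := .map (translationEquiv k m)
  zero_vadd s := by
    obtain ⟨p, hp, rfl⟩ := s.exists_mk_eq
    exact Subtype.ext (congrArg Associates.mk (polyTranslate_zero p))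
  add_vadd m m' s := by
    obtain ⟨p, hp, rfl⟩ := s.exists_mk_eq
    exact Subtype.ext (congrArg Associates.mk (polyTranslate_add m m' p))

theorem irreducible_polyTranslate (m : Fin r → ℤ) {p : MvPolynomial (Fin r) k}
    (hp : Irreducible p) : Irreducible (polyTranslate k m p) :=
  (MulEquiv.irreducible_iff (translationEquiv k m)).2 hp

theorem vadd_primeDivisor_mk (m : Fin r → ℤ) {p : MvPolynomial (Fin r) k} (hp : Irreducible p) :
    m +ᵥ PrimeDivisor.mk p hp = PrimeDivisor.mk _ (irreducible_polyTranslate m hp) := rfl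

variable [CharZero k]

theorem mem_stabilizer_primeDivisor_mk {m : Fin r → ℤ} {p : MvPolynomial (Fin r) k}
    {hp : Irreducible p} :
    m ∈ stabilizer (Fin r → ℤ) (PrimeDivisor.mk p hp) ↔ polyTranslate k m p = p := by
  rw [mem_stabilizer_iff, vadd_primeDivisor_mk, PrimeDivisor.mk_eq_mk_iff]
  refine ⟨fun h => polyTranslate_eq_self_of_associated one_ne_zero ?_, fun h => by rw [h]⟩
  rw [one_smul]
  exact h.symm

instance (s : PrimeDivisor (MvPolynomial (Fin r) k)) :
    IsAddTorsionFree ((Fin r → ℤ) ⧸ stabilizer (Fin r → ℤ) s) := by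
  obtain ⟨p, hp, rfl⟩ := s.exists_mk_eq
  refine isAddTorsionFree_quotient fun N hN m hm => mem_stabilizer_primeDivisor_mk.2 ?_
  refine polyTranslate_eq_self_of_associated hN ?_
  rw [mem_stabilizer_primeDivisor_mk.1 hm]

instance (s : PrimeDivisor (MvPolynomial (Fin r) k)) :
    Nontrivial ((Fin r → ℤ) ⧸ stabilizer (Fin r → ℤ) s) := by
  obtain ⟨p, hp, rfl⟩ := s.exists_mk_eq
  obtain ⟨m, hm⟩ := exists_polyTranslate_ne hp
  exact QuotientAddGroup.nontrivial_iff.2 fun htop =>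
    hm (mem_stabilizer_primeDivisor_mk.1 (htop ▸ AddSubgroup.mem_top m))

end TranslationAction

section HypergeometricTerms

theorem exists_forall_apply_add_one_eq_mul {A : Type*} [CommGroup A] (H : ℤ → A) :
    ∃ G : ℤ → A, ∀ c, G (c + 1) = G c * H c := by
  refine ⟨fun
    | .ofNat N => ∏ i ∈ Finset.range N, H i
    | .negSucc N => (∏ i ∈ Finset.range (N + 1), H (.negSucc i))⁻¹, fun c => ?_⟩
  match c with
  | .ofNat N => exact Finset.prod_range_succ _ N
  | .negSucc 0 => simp
  | .negSucc (N + 1) =>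
    change (∏ i ∈ Finset.range (N + 1), H (.negSucc i))⁻¹ =
      (∏ i ∈ Finset.range (N + 2), H (.negSucc i))⁻¹ * H (.negSucc (N + 1))
    rw [Finset.prod_range_succ _ (N + 1), mul_inv, inv_mul_cancel_right]

theorem mul_prod_range_eq_apply_add {A : Type*} [CommMonoid A] {G H : ℤ → A}
    (hG : ∀ c, G (c + 1) = G c * H c) (j : ℤ) (N : ℕ) :
    G j * ∏ ν ∈ Finset.range N, H (j + ν) = G (j + N) := by
  induction N with
  | zero => simp
  | succ N ih => rw [Finset.prod_range_succ, ← mul_assoc, ih, ← hG, Nat.cast_succ, add_assoc]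

variable {k : Type*} [Field k] {r : ℕ} {h : Polynomial k} {n : Fin r → ℤ}

theorem hgFactor_of_dotProduct_eq_zero {m : Fin r → ℤ} (hm : n ⬝ᵥ m = 0) (j : ℤ) :
    hgFactor k h n j m = 1 := by
  rw [dotProduct] at hm
  simp [hgFactor, hm]

theorem hgFactor_of_dotProduct_eq_one {m : Fin r → ℤ} (hm : n ⬝ᵥ m = 1) (j : ℤ) :
    hgFactor k h n j m = toRat k r (hShift k h n j) := by
  rw [dotProduct] at hm
  simp [hgFactor, hm]

theorem hgFactor_eq_div {G : ℤ → RatFuncField k r} (hG₀ : ∀ c, G c ≠ 0)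
    (hG : ∀ c, G (c + 1) = G c * toRat k r (hShift k h n c)) (j : ℤ) (m : Fin r → ℤ) :
    hgFactor k h n j m = G (j + n ⬝ᵥ m) / G j := by
  rw [eq_div_iff (hG₀ j), mul_comm, dotProduct, hgFactor]
  have hprod : ∀ i (N : ℕ), toRat k r (∏ ν ∈ Finset.range N, hShift k h n (i + ν)) =
      ∏ ν ∈ Finset.range N, toRat k r (hShift k h n (i + ν)) := fun i N => map_prod ..
  split_ifs with hpos hzero
  · rw [hprod, mul_prod_range_eq_apply_add hG, Int.toNat_of_nonneg (by omega)]
  · rw [hzero, add_zero, mul_one]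
  · have htelescope := mul_prod_range_eq_apply_add hG (∑ a, n a * m a + j)
      (-∑ a, n a * m a).toNat
    rw [Int.toNat_of_nonneg (by omega), ← sub_eq_add_neg, add_sub_cancel_left,
      ← hprod] at htelescope
    rw [← div_eq_mul_inv, ← htelescope, add_comm j, mul_div_cancel_right₀]
    exact right_ne_zero_of_mul (htelescope ▸ hG₀ j)

/-- The ring endomorphisms `τ m` extend the translations of polynomials. -/
abbrev ExtendsTranslations (τ : (Fin r → ℤ) → RatFuncField k r →+* RatFuncField k r) : Prop :=
  ∀ m p, τ m (toRat k r p) = toRat k r (polyTranslate k m p)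

variable {τ : (Fin r → ℤ) → RatFuncField k r →+* RatFuncField k r}

theorem map_hgFactor (hτ : ExtendsTranslations τ) (j : ℤ) (m m' : Fin r → ℤ) :
    τ m (hgFactor k h n j m') = hgFactor k h n (j + n ⬝ᵥ m) m' := by
  rw [hgFactor, hgFactor]
  split_ifs
  · simp only [hτ, map_prod, polyTranslate_hShift, add_right_comm]
  · exact map_one _
  · simp only [map_inv₀, hτ, map_prod, polyTranslate_hShift, ← add_assoc,
      add_right_comm _ _ (n ⬝ᵥ m)]

/-- The action of translations on the units of the rational function field. -/
abbrev unitsTranslate (τ : (Fin r → ℤ) → RatFuncField k r →+* RatFuncField k r)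
    (m : Fin r → ℤ) : (RatFuncField k r)ˣ →* (RatFuncField k r)ˣ :=
  Units.map (τ m : RatFuncField k r →* RatFuncField k r)

theorem exists_mem_mulCocycles_eq_hgFactor (hτ : ExtendsTranslations τ)
    (hh : ∀ c, hShift k h n c ≠ 0) (j : ℤ) :
    ∃ e ∈ mulCocycles (unitsTranslate τ), ∀ m, (e m : RatFuncField k r) = hgFactor k h n j m := by
  have hunit : ∀ c, toRat k r (hShift k h n c) ≠ 0 := fun c =>
    (map_ne_zero_iff _ (IsFractionRing.injective _ _)).2 (hh c)
  obtain ⟨G, hG⟩ := exists_forall_apply_add_one_eq_mul fun c => Units.mk0 _ (hunit c)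
  have hdiv : ∀ j m, hgFactor k h n j m = ↑(G (j + n ⬝ᵥ m) / G j) := fun j m => by
    rw [hgFactor_eq_div (G := fun c => G c) (fun c => (G c).ne_zero)
      (fun c => congrArg Units.val (hG c)), Units.val_div_eq_div_val]
  refine ⟨fun m => G (j + n ⬝ᵥ m) / G j, fun m m' => Units.ext ?_, fun m => (hdiv j m).symm⟩
  change ↑(G (j + n ⬝ᵥ (m + m')) / G j) =
    τ m ↑(G (j + n ⬝ᵥ m') / G j) * ↑(G (j + n ⬝ᵥ m) / G j)
  rw [← hdiv j m', map_hgFactor hτ, hdiv, ← Units.val_mul, div_mul_div_cancel, dotProduct_add,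
    add_assoc]

/-- The data of a product of hypergeometric factors built on a single irreducible polynomial
`h` and a single primitive linear form `n`. -/
structure HypergeometricTerm (k : Type*) [Field k] (r : ℕ) where
  /-- The irreducible univariate polynomial. -/
  h : Polynomial k
  /-- The coefficients of the linear form. -/
  n : Fin r → ℤ
  /-- The exponents of the factors. -/
  z : ℤ →₀ ℤ
  irreducible : Irreducible h
  exists_dotProduct_eq_one : ∃ m, n ⬝ᵥ m = 1

namespace HypergeometricTerm

theorem n_ne_zero (T : HypergeometricTerm k r) : T.n ≠ 0 := fun hn => by
  obtain ⟨m, hm⟩ := T.exists_dotProduct_eq_one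
  rw [hn, zero_dotProduct] at hm
  exact zero_ne_one hm

/-- The value at `m` of the cocycle attached to a hypergeometric term. -/
def value (T : HypergeometricTerm k r) (m : Fin r → ℤ) : RatFuncField k r :=
  ∏ j ∈ T.z.support, hgFactor k T.h T.n j m ^ T.z j

theorem exists_mem_mulCocycles_eq_value [CharZero k] (T : HypergeometricTerm k r)
    (hτ : ExtendsTranslations τ) :
    ∃ e ∈ mulCocycles (unitsTranslate τ), ∀ m, (e m : RatFuncField k r) = T.value m := by
  obtain ⟨m₀, hm₀⟩ := T.exists_dotProduct_eq_one
  choose e he heq using exists_mem_mulCocycles_eq_hgFactor hτ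
    (hShift_ne_zero hm₀ T.irreducible.ne_zero)
  refine ⟨∏ j ∈ T.z.support, e j ^ T.z j, prod_mem fun j _ => zpow_mem (he j) _, fun m => ?_⟩
  simp [value, heq]

theorem value_of_dotProduct_eq_zero (T : HypergeometricTerm k r) {m : Fin r → ℤ}
    (hm : T.n ⬝ᵥ m = 0) : T.value m = 1 :=
  Finset.prod_eq_one fun j _ => by rw [hgFactor_of_dotProduct_eq_zero hm, one_zpow]

theorem toAdd_divisor_of_eq_value {T : HypergeometricTerm k r} {m : Fin r → ℤ}
    (hm : T.n ⬝ᵥ m = 1) {p : MvPolynomial (Fin r) k} (hp : Irreducible p)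
    (hT : ∀ c : ℤ, hShift k T.h T.n c = polyTranslate k (c • m) p)
    {x : (RatFuncField k r)ˣ} (hx : (x : RatFuncField k r) = T.value m) :
    (divisor (MvPolynomial (Fin r) k) x).toAdd =
      T.z.mapDomain (fun j => j • m +ᵥ PrimeDivisor.mk p hp) := by
  have hirr : ∀ j : ℤ, Irreducible (polyTranslate k (j • m) p) := fun j =>
    irreducible_polyTranslate (j • m) hp
  let u : ℤ → (RatFuncField k r)ˣ := fun j =>
    Units.mk0 (toRat k r (polyTranslate k (j • m) p))
      ((map_ne_zero_iff _ (IsFractionRing.injective _ _)).2 (hirr j).ne_zero)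
  have hxu : x = ∏ j ∈ T.z.support, u j ^ T.z j := Units.ext <| by
    simp [hx, value, hgFactor_of_dotProduct_eq_one hm, hT, u]
  rw [hxu, map_prod, toAdd_prod]
  refine Finset.sum_congr rfl fun j _ => ?_
  rw [map_zpow, toAdd_zpow, toAdd_divisor_irreducible (hirr j) rfl, Finsupp.smul_single_one]
  rfl

end HypergeometricTerm

/-- A cocycle is of Ore–Sato form if it is the product of a coboundary and finitely many
hypergeometric terms. -/
def IsOreSatoForm (τ : (Fin r → ℤ) → RatFuncField k r →+* RatFuncField k r)
    (e : (Fin r → ℤ) → (RatFuncField k r)ˣ) : Prop :=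
  ∃ (F : (RatFuncField k r)ˣ) (L : List (HypergeometricTerm k r)),
    ∀ m, (e m : RatFuncField k r) = τ m F * (F : RatFuncField k r)⁻¹ * (L.map (·.value m)).prod

namespace IsOreSatoForm

variable {e e' : (Fin r → ℤ) → (RatFuncField k r)ˣ}

theorem one : IsOreSatoForm τ 1 := ⟨1, [], fun m => by simp⟩

theorem mul (he : IsOreSatoForm τ e) (he' : IsOreSatoForm τ e') : IsOreSatoForm τ (e * e') := by
  obtain ⟨F, L, hL⟩ := he
  obtain ⟨F', L', hL'⟩ := he'
  refine ⟨F * F', L ++ L', fun m => ?_⟩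
  rw [Pi.mul_apply, Units.val_mul, hL, hL', List.map_append, List.prod_append, Units.val_mul,
    map_mul, mul_inv]
  ring

theorem coboundary (F : (RatFuncField k r)ˣ) :
    IsOreSatoForm τ fun m => unitsTranslate τ m F / F :=
  ⟨F, [], fun m => by simp [div_eq_mul_inv]⟩

theorem of_eq_value {T : HypergeometricTerm k r} (he : ∀ m, (e m : RatFuncField k r) = T.value m) :
    IsOreSatoForm τ e :=
  ⟨1, [T], fun m => by simp [he]⟩

end IsOreSatoForm

end HypergeometricTerms

section LiftingDivisors

open AddAction

variable {k : Type*} [Field k] {r : ℕ}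
  {τ : (Fin r → ℤ) → RatFuncField k r →+* RatFuncField k r}
  {e : (Fin r → ℤ) → (RatFuncField k r)ˣ}
  {β : (Fin r → ℤ) → PrimeDivisor (MvPolynomial (Fin r) k) →₀ ℤ}
  {s₀ : PrimeDivisor (MvPolynomial (Fin r) k)}

theorem toAdd_divisor_unitsTranslate (hτ : ExtendsTranslations τ) (m : Fin r → ℤ)
    (x : (RatFuncField k r)ˣ) :
    (divisor (MvPolynomial (Fin r) k) (unitsTranslate τ m x)).toAdd =
      (divisor (MvPolynomial (Fin r) k) x).toAdd.mapDomain (m +ᵥ ·) :=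
  toAdd_divisor_map (σ := translationEquiv k m) (hτ m) x

/-- The cocycle of divisors of a cocycle of rational functions. -/
def divisorCocycle (e : (Fin r → ℤ) → (RatFuncField k r)ˣ) (m : Fin r → ℤ) :
    PrimeDivisor (MvPolynomial (Fin r) k) →₀ ℤ :=
  (divisor (MvPolynomial (Fin r) k) (e m)).toAdd

theorem divisorCocycle_mem_permCocycles (hτ : ExtendsTranslations τ)
    (he : e ∈ mulCocycles (unitsTranslate τ)) :
    divisorCocycle e ∈ permCocycles (Fin r → ℤ) (PrimeDivisor (MvPolynomial (Fin r) k)) :=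
  fun m m' => by
    rw [divisorCocycle, he m m', map_mul, toAdd_mul, toAdd_divisor_unitsTranslate hτ]
    rfl

theorem unitsTranslate_add (hτ : ExtendsTranslations τ) (m m' : Fin r → ℤ)
    (x : (RatFuncField k r)ˣ) :
    unitsTranslate τ (m + m') x = unitsTranslate τ m (unitsTranslate τ m' x) := by
  have hcomp : τ (m + m') = (τ m).comp (τ m') :=
    IsLocalization.ringHom_ext (nonZeroDivisors _) <| RingHom.ext fun p => by
      change τ (m + m') (toRat k r p) = τ m (τ m' (toRat k r p))
      rw [hτ, hτ, hτ, polyTranslate_add]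
  exact Units.ext (RingHom.congr_fun hcomp (x : RatFuncField k r))

theorem exists_isOreSatoForm_of_eq_coboundary (hτ : ExtendsTranslations τ)
    {f : PrimeDivisor (MvPolynomial (Fin r) k) →₀ ℤ}
    (hf : ∀ m, β m = f.mapDomain (m +ᵥ ·) - f) :
    ∃ e ∈ mulCocycles (unitsTranslate τ), IsOreSatoForm τ e ∧ divisorCocycle e = β := by
  obtain ⟨F, hF⟩ := divisor_surjective (K := RatFuncField k r) (.ofAdd f)
  refine ⟨_, coboundary_mem_mulCocycles (unitsTranslate_add hτ) F, .coboundary F,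
    funext fun m => ?_⟩
  rw [divisorCocycle, map_div, toAdd_div, toAdd_divisor_unitsTranslate hτ, hF, hf, toAdd_ofAdd]

theorem exists_isOreSatoForm_of_stabilizer_eq_ker [CharZero k] (hτ : ExtendsTranslations τ)
    (hβ : β ∈ permCocycles (Fin r → ℤ) (PrimeDivisor (MvPolynomial (Fin r) k)))
    (hsupp : ∀ m, ∀ s ∉ orbit (Fin r → ℤ) s₀, β m s = 0) {n m₀ : Fin r → ℤ} (hm₀ : n ⬝ᵥ m₀ = 1)
    (hker : ∀ m, m ∈ stabilizer (Fin r → ℤ) s₀ ↔ n ⬝ᵥ m = 0) :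
    ∃ e ∈ mulCocycles (unitsTranslate τ), IsOreSatoForm τ e ∧ divisorCocycle e = β := by
  obtain ⟨p, hp, rfl⟩ := s₀.exists_mk_eq
  have hfix : ∀ m, n ⬝ᵥ m = 0 → polyTranslate k m p = p := fun m hm =>
    mem_stabilizer_primeDivisor_mk.1 ((hker m).2 hm)
  have hgen : ∀ m, ∃ c : ℤ, m - c • m₀ ∈ stabilizer (Fin r → ℤ) (PrimeDivisor.mk p hp) := fun m =>
    ⟨n ⬝ᵥ m, by rw [hker, dotProduct_sub, dotProduct_smul, hm₀, smul_eq_mul, mul_one, sub_self]⟩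
  have hinj : Function.Injective fun j : ℤ => j • m₀ +ᵥ PrimeDivisor.mk p hp :=
    zsmul_vadd_injective fun c hc => by
      rwa [hker, dotProduct_smul, hm₀, smul_eq_mul, mul_one] at hc
  have hrange : ↑(β m₀).support ⊆ Set.range fun j : ℤ => j • m₀ +ᵥ PrimeDivisor.mk p hp :=
    fun s hs => exists_zsmul_vadd_eq_of_mem_orbit hgen
      (not_imp_comm.1 (hsupp m₀ s) (Finsupp.mem_support_iff.1 hs))
  obtain ⟨z, hz⟩ : ∃ z : ℤ →₀ ℤ, z.mapDomain (fun j => j • m₀ +ᵥ PrimeDivisor.mk p hp) = β m₀ :=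
    ⟨_, Finsupp.mapDomain_comapDomain _ hinj (β m₀) hrange⟩
  let T : HypergeometricTerm k r :=
    { h := lineRestrict 0 (fun i => (m₀ i : k)) p
      n := n
      z := z
      irreducible := irreducible_lineRestrict hm₀ hfix hp
      exists_dotProduct_eq_one := ⟨m₀, hm₀⟩ }
  obtain ⟨e, he, heT⟩ := T.exists_mem_mulCocycles_eq_value hτ
  refine ⟨e, he, .of_eq_value heT, sub_eq_zero.1 (permCocycle_eq_zero_of_cyclic_quotient
    (sub_mem (divisorCocycle_mem_permCocycles hτ he) hβ) hgen (fun t ht => ?_) ?_)⟩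
  · have het : e t = 1 := Units.ext ((heT t).trans (T.value_of_dotProduct_eq_zero ((hker t).1 ht)))
    rw [Pi.sub_apply, permCocycle_eq_zero_of_mem_stabilizer hβ hsupp
      (orbit_infinite_iff.2 (infinite_of_nontrivial_of_isAddTorsionFree _)) ht, sub_zero,
      divisorCocycle, het, map_one, toAdd_one]
  · rw [Pi.sub_apply, sub_eq_zero, divisorCocycle, HypergeometricTerm.toAdd_divisor_of_eq_value
      (T := T) hm₀ hp (hShift_lineRestrict hm₀ hfix) (heT m₀)]
    exact hz

theorem exists_isOreSatoForm_divisorCocycle_eq [CharZero k] (hτ : ExtendsTranslations τ)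
    (hβ : β ∈ permCocycles (Fin r → ℤ) (PrimeDivisor (MvPolynomial (Fin r) k))) :
    ∃ e ∈ mulCocycles (unitsTranslate τ), IsOreSatoForm τ e ∧ divisorCocycle e = β := by
  refine permCocycle_orbit_induction (P := fun β => ∃ e ∈ mulCocycles (unitsTranslate τ),
    IsOreSatoForm τ e ∧ divisorCocycle e = β) ?_ ?_ (fun s₀ β hβ hsupp => ?_) hβ
  · exact ⟨1, one_mem _, .one, funext fun m => by simp [divisorCocycle]⟩
  · rintro _ _ ⟨e, he, hform, rfl⟩ ⟨e', he', hform', rfl⟩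
    exact ⟨e * e', mul_mem he he', hform.mul hform', funext fun m => by simp [divisorCocycle]⟩
  · rcases exists_linearIndependent_pair_or_eq_ker_dotProduct (stabilizer (Fin r → ℤ) s₀) with
      ⟨g₁, g₂, hind⟩ | ⟨n, m₀, hm₀, hker⟩
    · obtain ⟨f, hf⟩ := exists_eq_coboundary_of_linearIndependent hβ hsupp hind
      exact exists_isOreSatoForm_of_eq_coboundary hτ hf
    · exact exists_isOreSatoForm_of_stabilizer_eq_ker hτ hβ hsupp hm₀ hker

theorem exists_hom_of_divisorCocycle_eq_zero (hτ : ExtendsTranslations τ)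
    (he : e ∈ mulCocycles (unitsTranslate τ)) (hdiv : divisorCocycle e = 0) :
    ∃ c : (Fin r → ℤ) → kˣ, (∀ m m', c (m + m') = c m * c m') ∧
      ∀ m, (e m : RatFuncField k r) = toRat k r (C (c m : k)) := by
  have hconst : ∀ m, ∃ c : kˣ, (e m : RatFuncField k r) = toRat k r (C (c : k)) := fun m => by
    obtain ⟨u, hu⟩ := exists_eq_algebraMap_of_divisor_eq_one
      (toAdd_eq_zero.1 (congrFun hdiv m))
    obtain ⟨a, ha, hau⟩ := isUnit_iff_eq_C_of_isReduced.1 u.isUnit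
    exact ⟨ha.unit, hu.trans (congrArg _ hau)⟩
  choose c hc using hconst
  have hinj : Function.Injective fun a : k => toRat k r (C a) :=
    (IsFractionRing.injective (MvPolynomial (Fin r) k) (RatFuncField k r)).comp (C_injective _ _)
  refine ⟨c, fun m m' => Units.ext (hinj ?_), hc⟩
  calc toRat k r (C ↑(c (m + m')))
    _ = τ m (e m') * e m := by rw [← hc, he m m']; rfl
    _ = toRat k r (C ↑(c m')) * toRat k r (C ↑(c m)) := by rw [hc, hc, hτ, algHom_C]; rfl
    _ = toRat k r (C ↑(c m * c m')) := by
      rw [Units.val_mul, mul_comm (c m : k), C_mul]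
      exact (map_mul (algebraMap _ _) _ _).symm

end LiftingDivisors

/-- **The Ore–Sato theorem** (existence form). -/
theorem ore_sato (k : Type*) [Field k] [CharZero k] (r : ℕ)
    (τ : (Fin r → ℤ) → (RatFuncField k r →+* RatFuncField k r))
    (hτ : ∀ (m : Fin r → ℤ) (p : MvPolynomial (Fin r) k),
      τ m (toRat k r p) = toRat k r (polyTranslate k m p))
    (b : (Fin r → ℤ) → (RatFuncField k r)ˣ)
    (hb : ∀ m m' : Fin r → ℤ,
      ((b (m + m') : RatFuncField k r)) = τ m (b m') * (b m)) :
    ∃ (c : (Fin r → ℤ) → kˣ) (F : (RatFuncField k r)ˣ) (l : ℕ)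
      (h : Fin l → Polynomial k) (n : Fin l → (Fin r → ℤ)) (z : Fin l → (ℤ →₀ ℤ)),
      (∀ m m' : Fin r → ℤ, c (m + m') = c m * c m') ∧
      (∀ i, Irreducible (h i)) ∧
      (∀ i, n i ≠ 0) ∧
      (∀ i, ∃ m : Fin r → ℤ, ∑ a, n i a * m a = 1) ∧
      (∀ m : Fin r → ℤ,
        (b m : RatFuncField k r) =
          toRat k r (C ((c m : k))) * (τ m (F : RatFuncField k r) * (F : RatFuncField k r)⁻¹) *
            ∏ i, ∏ j ∈ (z i).support, hgFactor k (h i) (n i) j m ^ (z i j)) := by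
  have hb' : b ∈ mulCocycles (unitsTranslate τ) := fun m m' => Units.ext (hb m m')
  obtain ⟨e, he, ⟨F, L, hL⟩, hdiv⟩ :=
    exists_isOreSatoForm_divisorCocycle_eq hτ (divisorCocycle_mem_permCocycles hτ hb')
  have hdiv' : divisorCocycle (b / e) = 0 := funext fun m => by
    rw [divisorCocycle, Pi.div_apply, map_div, toAdd_div, Pi.zero_apply, sub_eq_zero]
    exact (congrFun hdiv m).symm
  obtain ⟨c, hc, hbe⟩ := exists_hom_of_divisorCocycle_eq_zero hτ (div_mem hb' he) hdiv'
  refine ⟨c, F, L.length, fun i => L[i].h, fun i => L[i].n, fun i => L[i].z, hc,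
    fun i => L[i].irreducible, fun i => L[i].n_ne_zero, fun i => L[i].exists_dotProduct_eq_one,
    fun m => ?_⟩
  calc (b m : RatFuncField k r)
    _ = (b / e) m * e m := by rw [← Units.val_mul, Pi.div_apply, div_mul_cancel]
    _ = toRat k r (C (c m : k)) * (τ m F * (F : RatFuncField k r)⁻¹) *
        (L.map (·.value m)).prod := by rw [hbe, hL, ← mul_assoc]
    _ = _ := by rw [← Fin.prod_univ_fun_getElem]; rfl
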